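/- Let α ∈ (0,1), let x : [0,∞) → ℝ be continuously differentiable, and let u : [0,∞) → ℝ be differentiable. If (1/(1−α)) ∫_0^t x′(τ) · exp((α/(α−1))·(t−τ)) dτ = u(t) for all t ≥ 0, then x′(t) = α·u(t) + (1−α)·u′(t) for all t ≥ 0. -/

import Mathlib

open MeasureTheory intervalIntegral Real Set Filter

/-! The kernel factors as `exp (k * (t - τ)) = exp (k * t) * exp (-(k * τ))`, so the
Caputo–Fabrizio derivative `D` of `x` is an exponential times an integral with variable endpoint.
The product rule and the fundamental theorem of calculus then give
`(1 - α) * D' = x' - α * D`. -/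

section

variable {E : Type*} [NormedAddCommGroup E] [NormedSpace ℝ E] {f x u : ℝ → E} {α a t : ℝ}

/-- The Caputo–Fabrizio derivative of order `α` based at `a`, with normalization `M(α) = 1`.
The derivative of `x` is taken within `[a, ∞)`, hence is one-sided at the base point. -/
noncomputable def caputoFabrizioDeriv (α a : ℝ) (x : ℝ → E) (t : ℝ) : E :=
  (1 / (1 - α)) • ∫ τ in a..t, exp (α / (α - 1) * (t - τ)) • derivWithin x (Ici a) τ

theorem integral_exp_mul_sub_smul (k a b t : ℝ) (f : ℝ → E) :
    ∫ τ in a..b, exp (k * (t - τ)) • f τ = exp (k * t) • ∫ τ in a..b, exp (-(k * τ)) • f τ := by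
  have exp_split (τ : ℝ) : exp (k * (t - τ)) = exp (k * t) * exp (-(k * τ)) := by
    rw [mul_sub, sub_eq_add_neg, exp_add]
  simp only [exp_split, mul_smul, intervalIntegral.integral_smul]

variable [CompleteSpace E]

theorem hasDerivWithinAt_integral_of_continuousOn_Ici (hf : ContinuousOn f (Ici a)) (ht : a ≤ t) :
    HasDerivWithinAt (fun s ↦ ∫ τ in a..s, f τ) (f t) (Ici a) t := by
  -- `FTCFilter` has an instance for `𝓝[Icc _ _] t`, but none for `𝓝[Ici a] t` when `a < t`.
  have t_mem : t ∈ Icc a (t + 1) := ⟨ht, by linarith⟩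
  have hf_Icc : ContinuousOn f (Icc a (t + 1)) := hf.mono Icc_subset_Ici_self
  have hf_int : IntervalIntegrable f volume a t :=
    (hf.mono Icc_subset_Ici_self).intervalIntegrable_of_Icc ht
  have : Fact (t ∈ Icc a (t + 1)) := ⟨t_mem⟩
  have deriv_Icc : HasDerivWithinAt (fun s ↦ ∫ τ in a..s, f τ) (f t) (Icc a (t + 1)) t :=
    integral_hasDerivWithinAt_right hf_int
      (hf_Icc.stronglyMeasurableAtFilter_nhdsWithin measurableSet_Icc t) (hf_Icc t t_mem)
  exact deriv_Icc.mono_of_mem_nhdsWithin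
    (inter_mem_nhdsWithin (Ici a) (Iic_mem_nhds (lt_add_one t)))

theorem hasDerivWithinAt_integral_exp_mul_sub_smul (k : ℝ) (hf : ContinuousOn f (Ici a))
    (ht : a ≤ t) :
    HasDerivWithinAt (fun s ↦ ∫ τ in a..s, exp (k * (s - τ)) • f τ)
      (f t + k • ∫ τ in a..t, exp (k * (t - τ)) • f τ) (Ici a) t := by
  have deriv_exp : HasDerivWithinAt (fun s ↦ exp (k * s)) (exp (k * t) * k) (Ici a) t := by
    simpa using ((hasDerivWithinAt_id t (Ici a)).const_mul k).exp
  have deriv_integral : HasDerivWithinAt (fun s ↦ ∫ τ in a..s, exp (-(k * τ)) • f τ)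
      (exp (-(k * t)) • f t) (Ici a) t :=
    hasDerivWithinAt_integral_of_continuousOn_Ici (ContinuousOn.smul (by fun_prop) hf) ht
  simp only [integral_exp_mul_sub_smul]
  refine (deriv_exp.smul deriv_integral).congr_deriv ?_
  simp only [smul_smul, ← exp_add, add_neg_cancel, exp_zero, one_smul, mul_comm k]

theorem hasDerivWithinAt_caputoFabrizioDeriv (hx : ContDiffOn ℝ 1 x (Ici a)) (ht : a ≤ t) :
    HasDerivWithinAt (caputoFabrizioDeriv α a x)
      ((1 / (1 - α)) • (derivWithin x (Ici a) t - α • caputoFabrizioDeriv α a x t)) (Ici a) t := by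
  have hx' : ContinuousOn (derivWithin x (Ici a)) (Ici a) :=
    hx.continuousOn_derivWithin (uniqueDiffOn_Ici a) le_rfl
  have rate : α / (α - 1) = -(α * (1 / (1 - α))) := by
    rw [← neg_sub 1 α, div_neg, mul_one_div]
  refine ((hasDerivWithinAt_integral_exp_mul_sub_smul (α / (α - 1)) hx' ht).const_smul
    (1 / (1 - α))).congr_deriv ?_
  rw [caputoFabrizioDeriv, smul_smul, rate, neg_smul, ← sub_eq_add_neg]

theorem cf_eq_u_implies_ode_general (hα : α ≠ 1) (hx : ContDiffOn ℝ 1 x (Ici a))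
    (h : EqOn (caputoFabrizioDeriv α a x) u (Ici a)) :
    DifferentiableOn ℝ u (Ici a) ∧
      ∀ t, a ≤ t →
        derivWithin x (Ici a) t = α • u t + (1 - α) • derivWithin u (Ici a) t := by
  have deriv_u (t : ℝ) (ht : a ≤ t) : HasDerivWithinAt u
      ((1 / (1 - α)) • (derivWithin x (Ici a) t - α • u t)) (Ici a) t := by
    rw [← h ht]
    exact (hasDerivWithinAt_caputoFabrizioDeriv hx ht).congr_of_mem h.symm ht
  refine ⟨fun t ht ↦ (deriv_u t ht).differentiableWithinAt, fun t ht ↦ ?_⟩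
  rw [(deriv_u t ht).derivWithin (uniqueDiffOn_Ici a t ht), smul_smul,
    mul_one_div_cancel (sub_ne_zero.2 hα.symm), one_smul, add_sub_cancel]

end

/-- If `x` is `C¹` on `[0,∞)`, `u` is differentiable on `[0,∞)`, and the Caputo–Fabrizio
fractional derivative of `x` equals `u(t)` for all `t ≥ 0`, then
`x'(t) = α u(t) + (1-α) u'(t)` for all `t ≥ 0`. -/
theorem cf_eq_u_implies_ode (α : ℝ) (hα : α ∈ Set.Ioo (0 : ℝ) 1) (x u : ℝ → ℝ)
    (hx : ContDiffOn ℝ 1 x (Set.Ici 0))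
    (hu : DifferentiableOn ℝ u (Set.Ici 0))
    (h : ∀ t : ℝ, 0 ≤ t →
      (1 / (1 - α)) *
        (∫ τ in (0 : ℝ)..t, derivWithin x (Set.Ici 0) τ * Real.exp ((α / (α - 1)) * (t - τ)))
      = u t) :
    ∀ t : ℝ, 0 ≤ t →
      derivWithin x (Set.Ici 0) t = α * u t + (1 - α) * derivWithin u (Set.Ici 0) t :=
  (cf_eq_u_implies_ode_general hα.2.ne hx fun t ht ↦ by
    simpa only [caputoFabrizioDeriv, smul_eq_mul, mul_comm (exp _)] using h t ht).2
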